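/- arXiv:2402.07882 — 3 statements merged into one kernel-verified Lean document; each statement's English description precedes it below -/
import Mathlib

section
/- The following are equivalent: (i) there exist an F-vector space U of dimension 7, a hyperplane H of U, a nondegenerate quadratic form Q on H of Witt defect 0 (a Klein quadric Q⁺(5,q)), a generator Π of Q (a plane), and a hyperbolic avsp for (U, H, Q, Π) (i.e., a hyperbolic affine spread of PG(6,q)); (ii) there exist an F-vector space V of dimension 8 and a nondegenerate quadratic form Q' on V of Witt defect 0 (a triality quadric Q⁺(7,q)) admitting a spread. -/
open Module Submodule

section Defs

variable {F : Type*} [Field F] {V : Type*} [AddCommGroup V] [Module F V]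

/-- A subspace is totally singular if the quadratic form vanishes on it. -/
def IsTotallySingular (Q : QuadraticForm F V) (W : Submodule F V) : Prop :=
  ∀ x ∈ W, Q x = 0

/-- The Witt index: maximal dimension of a totally singular subspace. -/
noncomputable def wittIndex (Q : QuadraticForm F V) : ℕ :=
  sSup {n : ℕ | ∃ W : Submodule F V, IsTotallySingular Q W ∧ Module.finrank F ↥W = n}

/-- Nondegeneracy: the only singular vector orthogonal to everything is `0`. -/
def QuadNondeg (Q : QuadraticForm F V) : Prop :=
  ∀ v : V, Q v = 0 → (∀ x : V, QuadraticMap.polar Q v x = 0) → v = 0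

/-- A generator: totally singular subspace of dimension the Witt index. -/
def IsGenerator (Q : QuadraticForm F V) (G : Submodule F V) : Prop :=
  IsTotallySingular Q G ∧ Module.finrank F ↥G = wittIndex Q

/-- A spread of `Q`. -/
def IsSpread (Q : QuadraticForm F V) (S : Set (Submodule F V)) : Prop :=
  (∀ G ∈ S, IsGenerator Q G) ∧
  (∀ G ∈ S, ∀ G' ∈ S, G ≠ G' → G ⊓ G' = ⊥) ∧
  (∀ v : V, Q v = 0 → ∃ G ∈ S, v ∈ G)

/-- The perp of a vector with respect to the polar form of `Q`. -/
def vecPerp (Q : QuadraticForm F V) (u : V) : Submodule F V :=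
  LinearMap.ker (QuadraticMap.polarBilin Q u)

/-- The perp of a subspace with respect to the polar form of `Q`. -/
def subPerp (Q : QuadraticForm F V) (G : Submodule F V) : Submodule F V :=
  ⨅ g ∈ G, vecPerp Q g

/-- Hyperbolic (e = 0), parabolic (e = 1) or elliptic (e = 2) affine vector space
partition for `(U, H, Q, Pgen)`. -/
def IsAvsp [Fintype F] (e r : ℕ) {U : Type*} [AddCommGroup U] [Module F U]
    (H : Submodule F U) (Q : QuadraticForm F ↥H) (Pgen : Submodule F ↥H)
    (P : Set (Submodule F U)) : Prop :=
  P.ncard = Fintype.card F ^ ((r + e + 1) / 2) ∧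
  (∀ S ∈ P, Module.finrank F ↥S = (r + 3 - e) / 2 ∧ ¬ S ≤ H) ∧
  (∀ L : Submodule F U, Module.finrank F ↥L = 1 → ¬ L ≤ H → ∃! S, S ∈ P ∧ L ≤ S) ∧
  (∀ S ∈ P, IsGenerator Q (S.comap H.subtype) ∧ S.comap H.subtype ⊓ Pgen = ⊥) ∧
  (∀ S ∈ P, ∀ T ∈ P, S ≠ T → S.comap H.subtype ≠ T.comap H.subtype) ∧
  (∀ S ∈ P, ∀ T ∈ P, S ≠ T → Module.finrank F ↥(S ⊓ T) ≤ 1) ∧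
  (∀ S ∈ P, ∀ T ∈ P, S ≠ T →
    Module.finrank F ↥(S.comap H.subtype ⊓ T.comap H.subtype) = 1 →
      QuadNondeg (Q.comp ((S ⊔ T).comap H.subtype).subtype) ∧
      Module.finrank F ↥((S ⊔ T).comap H.subtype) =
        2 * wittIndex (Q.comp ((S ⊔ T).comap H.subtype).subtype))

end Defs


section QuadraticForms

variable {F : Type*} [Field F] {V W : Type*} [AddCommGroup V] [Module F V]
  [AddCommGroup W] [Module F W]

theorem IsTotallySingular.polar_eq_zero {Q : QuadraticForm F V} {G : Submodule F V}
    (hG : IsTotallySingular Q G) {x y : V} (hx : x ∈ G) (hy : y ∈ G) :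
    QuadraticMap.polar Q x y = 0 := by
  simp [QuadraticMap.polar, hG _ (G.add_mem hx hy), hG _ hx, hG _ hy]

theorem QuadNondeg.finrank_add_finrank_coannihilator [FiniteDimensional F V]
    {Q : QuadraticForm F V} (hQ : QuadNondeg Q) {G : Submodule F V}
    (hG : IsTotallySingular Q G) :
    finrank F G + finrank F (G.map Q.polarBilin).dualCoannihilator = finrank F V := by
  have hinj : Function.Injective (Q.polarBilin ∘ₗ G.subtype) := by
    rw [← LinearMap.ker_eq_bot, LinearMap.ker_eq_bot']
    intro g hg
    exact Subtype.ext (hQ g (hG _ g.2) fun x ↦ by simpa using LinearMap.congr_fun hg x)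
  have hrank : finrank F (G.map Q.polarBilin) = finrank F G := by
    rw [← LinearMap.finrank_range_of_inj hinj, LinearMap.range_comp, Submodule.range_subtype]
  rw [← hrank]
  exact Subspace.finrank_add_finrank_dualCoannihilator_eq _

theorem mem_dualCoannihilator_map_polarBilin {Q : QuadraticForm F V} {G : Submodule F V} {v : V} :
    v ∈ (G.map Q.polarBilin).dualCoannihilator ↔ ∀ g ∈ G, QuadraticMap.polar Q g v = 0 := by
  simp [Submodule.mem_dualCoannihilator]

theorem IsTotallySingular.le_coannihilator {Q : QuadraticForm F V} {G : Submodule F V}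
    (hG : IsTotallySingular Q G) : G ≤ (G.map Q.polarBilin).dualCoannihilator := fun _ hv ↦
  mem_dualCoannihilator_map_polarBilin.2 fun _ hg ↦ hG.polar_eq_zero hg hv

theorem QuadNondeg.two_mul_finrank_le [FiniteDimensional F V] {Q : QuadraticForm F V}
    (hQ : QuadNondeg Q) {G : Submodule F V} (hG : IsTotallySingular Q G) :
    2 * finrank F G ≤ finrank F V := by
  have := hQ.finrank_add_finrank_coannihilator hG
  have := Submodule.finrank_mono hG.le_coannihilator
  omega

theorem QuadNondeg.mem_of_polar_eq_zero [FiniteDimensional F V] {Q : QuadraticForm F V}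
    (hQ : QuadNondeg Q) {G : Submodule F V} (hG : IsTotallySingular Q G)
    (hdim : finrank F V = 2 * finrank F G) {v : V}
    (hv : ∀ g ∈ G, QuadraticMap.polar Q g v = 0) : v ∈ G := by
  have := hQ.finrank_add_finrank_coannihilator hG
  rw [Submodule.eq_of_le_of_finrank_le hG.le_coannihilator (by omega)]
  exact mem_dualCoannihilator_map_polarBilin.2 hv

theorem bddAbove_finrank_isTotallySingular [FiniteDimensional F V] (Q : QuadraticForm F V) :
    BddAbove {n : ℕ | ∃ G : Submodule F V, IsTotallySingular Q G ∧ finrank F G = n} :=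
  ⟨finrank F V, by rintro _ ⟨G, -, rfl⟩; exact G.finrank_le⟩

theorem exists_isGenerator [FiniteDimensional F V] (Q : QuadraticForm F V) :
    ∃ G, IsGenerator Q G :=
  Nat.sSup_mem
    (s := {n : ℕ | ∃ G : Submodule F V, IsTotallySingular Q G ∧ finrank F G = n})
    ⟨0, ⊥, by simp [IsTotallySingular], by simp⟩ (bddAbove_finrank_isTotallySingular Q)

theorem QuadNondeg.wittIndex_eq [FiniteDimensional F V] {Q : QuadraticForm F V}
    (hQ : QuadNondeg Q) {G : Submodule F V} (hG : IsTotallySingular Q G)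
    (hdim : finrank F V = 2 * finrank F G) : wittIndex Q = finrank F G := by
  refine le_antisymm ?_ (le_csSup (bddAbove_finrank_isTotallySingular Q) ⟨G, hG, rfl⟩)
  obtain ⟨W, hW, hWd⟩ := exists_isGenerator Q
  have := hQ.two_mul_finrank_le hW
  omega

theorem QuadNondeg.comp_equiv {Q : QuadraticForm F W} (hQ : QuadNondeg Q) (e : V ≃ₗ[F] W) :
    QuadNondeg (Q.comp (e : V →ₗ[F] W)) := by
  intro v hv hp
  refine e.map_eq_zero_iff.1 (hQ _ (by simpa using hv) fun x ↦ ?_)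
  simpa [QuadraticMap.polar] using hp (e.symm x)

theorem IsTotallySingular.comap_equiv {Q : QuadraticForm F W} {G : Submodule F W}
    (hG : IsTotallySingular Q G) (e : V ≃ₗ[F] W) :
    IsTotallySingular (Q.comp (e : V →ₗ[F] W)) (G.comap (e : V →ₗ[F] W)) :=
  fun _ hx ↦ hG _ hx

theorem finrank_comap_equiv (G : Submodule F W) (e : V ≃ₗ[F] W) :
    finrank F (G.comap (e : V →ₗ[F] W)) = finrank F G := by
  rw [Submodule.comap_equiv_eq_map_symm, LinearEquiv.finrank_map_eq]

theorem wittIndex_comp_equiv (Q : QuadraticForm F W) (e : V ≃ₗ[F] W) :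
    wittIndex (Q.comp (e : V →ₗ[F] W)) = wittIndex Q := by
  unfold wittIndex
  congr 1
  ext n
  constructor
  · rintro ⟨G, hG, rfl⟩
    refine ⟨G.map (e : V →ₗ[F] W), ?_, LinearEquiv.finrank_map_eq _ _⟩
    rintro _ ⟨x, hx, rfl⟩
    exact hG x hx
  · rintro ⟨G, hG, rfl⟩
    exact ⟨_, hG.comap_equiv e, finrank_comap_equiv _ _⟩

theorem IsSpread.comap_equiv {Q : QuadraticForm F W} {S : Set (Submodule F W)}
    (hS : IsSpread Q S) (e : V ≃ₗ[F] W) :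
    IsSpread (Q.comp (e : V →ₗ[F] W)) ((fun G ↦ G.comap (e : V →ₗ[F] W)) '' S) := by
  obtain ⟨hgen, hdisj, hcov⟩ := hS
  refine ⟨?_, ?_, ?_⟩
  · rintro _ ⟨G, hG, rfl⟩
    exact ⟨(hgen G hG).1.comap_equiv e, by
      rw [finrank_comap_equiv, wittIndex_comp_equiv, (hgen G hG).2]⟩
  · rintro _ ⟨G, hG, rfl⟩ _ ⟨G', hG', rfl⟩ hne
    rw [← Submodule.comap_inf, hdisj G hG G' hG' (by rintro rfl; exact hne rfl)]
    exact LinearEquiv.ker e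
  · intro v hv
    obtain ⟨G, hG, hvG⟩ := hcov (e v) (by simpa using hv)
    exact ⟨_, ⟨G, hG, rfl⟩, hvG⟩

theorem finrank_inf_add_one_of_not_le [FiniteDimensional F V] {H S : Submodule F V}
    (hH : finrank F H + 1 = finrank F V) (hS : ¬ S ≤ H) :
    finrank F (S ⊓ H : Submodule F V) + 1 = finrank F S := by
  have h1 := Submodule.finrank_sup_add_finrank_inf_eq S H
  have h2 : finrank F H < finrank F (S ⊔ H : Submodule F V) :=
    Submodule.finrank_lt_finrank_of_lt (lt_of_le_of_ne le_sup_right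
      fun h ↦ hS (h ▸ le_sup_left))
  have h3 := (S ⊔ H).finrank_le
  omega

end QuadraticForms

section Counting

variable {F : Type*} [Field F] [Fintype F] {V : Type*} [AddCommGroup V] [Module F V]

theorem ncard_biUnion_eq_mul {α ι : Type*} [Finite α] [Finite ι] (T : Set ι) (f : ι → Set α)
    (m : ℕ) (hcard : ∀ i ∈ T, (f i).ncard = m) (hdisj : T.PairwiseDisjoint f) :
    (⋃ i ∈ T, f i).ncard = T.ncard * m := by
  classical
  have := Fintype.ofFinite α
  have := Fintype.ofFinite ι
  have hunion : (⋃ i ∈ T, f i) = (T.toFinset.biUnion fun i ↦ (f i).toFinset : Finset α) := by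
    ext; simp
  rw [hunion, Set.ncard_coe_finset, Finset.card_biUnion, Finset.sum_const_nat (m := m),
    Set.ncard_eq_toFinset_card']
  · intro i hi
    rw [← Set.ncard_eq_toFinset_card', hcard i (by simpa using hi)]
  · intro i hi j hj hij
    simpa [Function.onFun] using hdisj (by simpa using hi) (by simpa using hj) hij

theorem Submodule.ncard_eq_pow [FiniteDimensional F V] (G : Submodule F V) :
    (G : Set V).ncard = Fintype.card F ^ finrank F G := by
  rw [← Nat.card_coe_set_eq, ← Nat.card_eq_fintype_card]
  exact Module.natCard_eq_pow_finrank (V := G)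

theorem card_mul_card_fiber {W : Type*} [AddCommGroup W] [Module F W] [Fintype W]
    [DecidableEq F] {f : W →ₗ[F] F} (hf : f ≠ 0) (c : F) :
    Fintype.card F * (Finset.univ.filter fun w ↦ f w = c).card = Fintype.card W := by
  have hsurj := LinearMap.surjective hf
  have hconst : ∀ d : F, (Finset.univ.filter fun w ↦ f w = d).card =
      (Finset.univ.filter fun w ↦ f w = c).card := fun d ↦
    AddMonoidHom.card_fiber_eq_of_mem_range f.toAddMonoidHom (hsurj d) (hsurj c)
  rw [← Finset.card_univ (α := W), Finset.card_eq_sum_card_fiberwise (f := f)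
    (s := Finset.univ) (t := Finset.univ) (by simp), Finset.sum_congr rfl fun d _ ↦ hconst d]
  simp

theorem QuadNondeg.card_mul_ncard_singular_diff [FiniteDimensional F V] {Q : QuadraticForm F V}
    (hQ : QuadNondeg Q) {G : Submodule F V} (hG : IsTotallySingular Q G)
    (hdim : finrank F V = 2 * finrank F G) :
    Fintype.card F * ({v | Q v = 0} \ (G : Set V)).ncard = ((G : Set V)ᶜ).ncard := by
  classical
  have : Finite V := Module.finite_of_finite F
  have := Fintype.ofFinite V
  set A : Finset V := Finset.univ.filter (· ∉ G) with hA
  have hrow : ∀ v ∈ A, Fintype.card F * ∑ p : G, (if Q (v + p) = 0 then 1 else 0) =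
      Fintype.card G := by
    intro v hv
    have hne : Q.polarBilin v ∘ₗ G.subtype ≠ 0 := by
      intro h0
      refine (Finset.mem_filter.1 hv).2 (hQ.mem_of_polar_eq_zero hG hdim fun g hg ↦ ?_)
      rw [QuadraticMap.polar_comm]
      simpa using LinearMap.congr_fun h0 ⟨g, hg⟩
    rw [← card_mul_card_fiber hne (-Q v), Finset.sum_boole, Nat.cast_id]
    congr 3
    ext p
    have hp := hG _ p.2
    simp [QuadraticMap.map_add, hp, eq_neg_iff_add_eq_zero, add_comm]
  have hcol : ∀ p : G, ∑ v ∈ A, (if Q (v + p) = 0 then 1 else 0) =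
      (A.filter fun v ↦ Q v = 0).card := by
    intro p
    rw [Finset.card_filter]
    refine Finset.sum_equiv (Equiv.addRight (p : V)) (fun v ↦ ?_) (fun v _ ↦ rfl)
    simp [hA, Submodule.add_mem_iff_left G p.2]
  have hdouble : Fintype.card F * (Fintype.card G * (A.filter fun v ↦ Q v = 0).card) =
      A.card * Fintype.card G := by
    rw [← Finset.sum_const_nat hrow, ← Finset.mul_sum, Finset.sum_comm,
      Finset.sum_congr rfl fun p _ ↦ hcol p]
    simp
  have hN : ({v | Q v = 0} \ (G : Set V)).ncard = (A.filter fun v ↦ Q v = 0).card := by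
    rw [← Set.ncard_coe_finset]
    congr 1
    ext v
    simp [hA, and_comm]
  have hM : ((G : Set V)ᶜ).ncard = A.card := by
    rw [← Set.ncard_coe_finset]
    congr 1
    ext v
    simp [hA]
  rw [hN, hM]
  refine Nat.eq_of_mul_eq_mul_right (Fintype.card_pos (α := G)) ?_
  rw [← hdouble]
  ring

/-- In a hyperbolic quadric of dimension `8`, a generator together with `q ^ 3` further pairwise
disjoint generators covers all singular vectors. -/
theorem QuadNondeg.mem_of_ncard_eq [FiniteDimensional F V] {Q : QuadraticForm F V}
    (hQ : QuadNondeg Q) (hV : finrank F V = 8) {G₀ : Submodule F V}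
    (hG₀ : IsTotallySingular Q G₀) (hdim₀ : finrank F G₀ = 4) {T : Set (Submodule F V)}
    (hT : T.ncard = Fintype.card F ^ 3)
    (hTS : ∀ G ∈ T, IsTotallySingular Q G ∧ finrank F G = 4 ∧ G ⊓ G₀ = ⊥)
    (hdisj : ∀ G ∈ T, ∀ G' ∈ T, G ≠ G' → G ⊓ G' = ⊥) {v : V} (hv : Q v = 0) (hv₀ : v ∉ G₀) :
    ∃ G ∈ T, v ∈ G := by
  have : Finite V := Module.finite_of_finite F
  have : Finite (Submodule F V) := Finite.of_injective _ SetLike.coe_injective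
  have hcount := hQ.card_mul_ncard_singular_diff hG₀ (by omega)
  have hcompl := Set.ncard_add_ncard_compl (G₀ : Set V)
  rw [G₀.ncard_eq_pow, hdim₀, Module.natCard_eq_pow_finrank (K := F), hV,
    Nat.card_eq_fintype_card] at hcompl
  have hunion := ncard_biUnion_eq_mul T (fun G ↦ (G : Set V) \ {0}) (Fintype.card F ^ 4 - 1)
    (fun G hG ↦ by
      rw [Set.ncard_sdiff_singleton_of_mem G.zero_mem, G.ncard_eq_pow, (hTS G hG).2.1])
    (fun G hG G' hG' hne ↦ by
      refine Set.disjoint_left.2 fun x hx hx' ↦ hx.2 ?_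
      have hxx : x ∈ G ⊓ G' := ⟨hx.1, hx'.1⟩
      rwa [hdisj G hG G' hG' hne] at hxx)
  have hsub : (⋃ G ∈ T, (G : Set V) \ {0}) ⊆ {v | Q v = 0} \ (G₀ : Set V) := by
    simp only [Set.iUnion_subset_iff]
    refine fun G hG x hx ↦ ⟨(hTS G hG).1 x hx.1, fun hx₀ ↦ hx.2 ?_⟩
    have hxx : x ∈ G ⊓ G₀ := ⟨hx.1, hx₀⟩
    rwa [(hTS G hG).2.2] at hxx
  have heq := Set.eq_of_subset_of_ncard_le hsub (by
    have hq : 0 < Fintype.card F := Fintype.card_pos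
    refine Nat.le_of_mul_le_mul_left ?_ hq
    rw [hcount, hunion, hT]
    obtain ⟨m, hm⟩ : ∃ m, Fintype.card F ^ 4 = m + 1 :=
      ⟨_, (Nat.sub_add_cancel (Nat.one_le_pow _ _ hq)).symm⟩
    have h8 : Fintype.card F ^ 8 = Fintype.card F ^ 4 * Fintype.card F ^ 4 := by ring
    have h4 : Fintype.card F * (Fintype.card F ^ 3 * m) = Fintype.card F ^ 4 * m := by ring
    rw [h8, hm] at hcompl
    rw [hm, Nat.add_sub_cancel, h4, hm]
    nlinarith)
  have hvU : v ∈ ⋃ G ∈ T, (G : Set V) \ {0} := heq ▸ ⟨hv, hv₀⟩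
  simp only [Set.mem_iUnion] at hvU
  obtain ⟨G, hG, hvG⟩ := hvU
  exact ⟨G, hG, hvG.1⟩

/-- A set of `4`-dimensional subspaces partitioning the complement of a hyperplane in a
`7`-dimensional space has `q ^ 3` members. -/
theorem ncard_eq_of_partition [FiniteDimensional F V] (hV : finrank F V = 7) {H : Submodule F V}
    (hH : finrank F H = 6) {P : Set (Submodule F V)}
    (hP : ∀ S ∈ P, finrank F S = 4 ∧ ¬ S ≤ H)
    (hpart : ∀ x ∉ H, ∃! S, S ∈ P ∧ x ∈ S) : P.ncard = Fintype.card F ^ 3 := by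
  have : Finite V := Module.finite_of_finite F
  have : Finite (Submodule F V) := Finite.of_injective _ SetLike.coe_injective
  have hq : 0 < Fintype.card F := Fintype.card_pos
  have hone : 1 < Fintype.card F := Fintype.one_lt_card
  have hunion := ncard_biUnion_eq_mul P (fun S ↦ (S : Set V) \ H)
    (Fintype.card F ^ 4 - Fintype.card F ^ 3)
    (fun S hS ↦ by
      have h := Set.ncard_inter_add_ncard_sdiff_eq_ncard (S : Set V) H
      have h3 := finrank_inf_add_one_of_not_le (by omega) (hP S hS).2
      rw [← Submodule.coe_inf, Submodule.ncard_eq_pow, Submodule.ncard_eq_pow, (hP S hS).1,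
        show finrank F (S ⊓ H : Submodule F V) = 3 by have := (hP S hS).1; omega] at h
      omega)
    (fun S hS S' hS' hne ↦ Set.disjoint_left.2 fun x hx hx' ↦
      hne ((hpart x hx.2).unique ⟨hS, hx.1⟩ ⟨hS', hx'.1⟩))
  have heq : (⋃ S ∈ P, (S : Set V) \ H) = (H : Set V)ᶜ := by
    ext x
    simp only [Set.mem_iUnion, Set.mem_compl_iff]
    constructor
    · rintro ⟨S, -, hx⟩
      exact hx.2
    · intro hx
      obtain ⟨S, ⟨hS, hxS⟩, -⟩ := hpart x hx
      exact ⟨S, hS, hxS, hx⟩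
  have hcompl := Set.ncard_add_ncard_compl (H : Set V)
  rw [← heq, hunion, H.ncard_eq_pow, hH, Module.natCard_eq_pow_finrank (K := F), hV,
    Nat.card_eq_fintype_card] at hcompl
  obtain ⟨m, hm⟩ : ∃ m, Fintype.card F = m + 1 + 1 := ⟨Fintype.card F - 2, by omega⟩
  have h4 : Fintype.card F ^ 4 - Fintype.card F ^ 3 = Fintype.card F ^ 3 * (m + 1) := by
    rw [pow_succ, ← Nat.mul_sub_one, hm]; rfl
  rw [h4] at hcompl
  refine Nat.eq_of_mul_eq_mul_right (m := Fintype.card F ^ 3 * (m + 1)) (by positivity) ?_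
  have h7 : Fintype.card F ^ 7 =
      Fintype.card F ^ 6 + Fintype.card F ^ 3 * (Fintype.card F ^ 3 * (m + 1)) := by
    rw [hm]; ring
  omega

end Counting

section HyperbolicExtension

variable {F : Type*} [Field F] {U : Type*} [AddCommGroup U] [Module F U]

/-- The quadratic form `(x, a) ↦ Q x + l x * a` on `U × F`. It adjoins the singular vector `(0, 1)`,
whose perp is `ker l × F`. -/
def hyperbolicExt (Q : QuadraticForm F U) (l : U →ₗ[F] F) : QuadraticForm F (U × F) :=
  Q.comp (LinearMap.fst F U F) +
    QuadraticMap.linMulLin (l ∘ₗ LinearMap.fst F U F) (LinearMap.snd F U F)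

@[simp]
theorem hyperbolicExt_apply (Q : QuadraticForm F U) (l : U →ₗ[F] F) (v : U × F) :
    hyperbolicExt Q l v = Q v.1 + l v.1 * v.2 := by
  simp [hyperbolicExt]

@[simp]
theorem polar_hyperbolicExt (Q : QuadraticForm F U) (l : U →ₗ[F] F) (v w : U × F) :
    QuadraticMap.polar (hyperbolicExt Q l) v w =
      QuadraticMap.polar Q v.1 w.1 + l v.1 * w.2 + l w.1 * v.2 := by
  simp only [QuadraticMap.polar, hyperbolicExt_apply, Prod.fst_add, Prod.snd_add, map_add]
  ring

@[simp]
theorem polar_comp_subtype (Q : QuadraticForm F U) (H : Submodule F U) (x y : H) :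
    QuadraticMap.polar (Q.comp H.subtype) x y = QuadraticMap.polar Q x y := rfl

theorem eq_hyperbolicExt {Q : QuadraticForm F (U × F)} (hQ : Q (0, 1) = 0) :
    ∃ (Q₀ : QuadraticForm F U) (l : U →ₗ[F] F), Q = hyperbolicExt Q₀ l := by
  refine ⟨Q.comp (LinearMap.inl F U F), Q.polarBilin (0, 1) ∘ₗ LinearMap.inl F U F, ?_⟩
  ext ⟨x, a⟩
  have hx : ((x, a) : U × F) = (x, 0) + a • (0, 1) := by simp
  rw [hx, QuadraticMap.map_add Q, QuadraticMap.map_smul, hQ, QuadraticMap.polar_smul_right,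
    QuadraticMap.polar_comm]
  simp [mul_comm]

theorem exists_apply_eq_one {l : U →ₗ[F] F} {S : Submodule F U} (hS : ¬ S ≤ LinearMap.ker l) :
    ∃ s ∈ S, l s = 1 := by
  obtain ⟨t, htS, ht⟩ := SetLike.not_le_iff_exists.1 hS
  rw [LinearMap.mem_ker] at ht
  exact ⟨(l t)⁻¹ • t, S.smul_mem _ htS, by simp [ht]⟩

theorem finrank_ker_add_one [FiniteDimensional F U] {l : U →ₗ[F] F} (hl : l ≠ 0) :
    finrank F (LinearMap.ker l) + 1 = finrank F U :=
  Module.Dual.finrank_ker_add_one_of_ne_zero hl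

theorem QuadNondeg.hyperbolicExt {Q : QuadraticForm F U} {l : U →ₗ[F] F} (hl : l ≠ 0)
    (hQ : QuadNondeg (Q.comp (LinearMap.ker l).subtype)) : QuadNondeg (hyperbolicExt Q l) := by
  rintro ⟨x, a⟩ hv hp
  have hx : l x = 0 := by simpa using hp (0, 1)
  have hx0 : x = 0 := by
    refine congrArg Subtype.val (hQ ⟨x, hx⟩ (by simpa [hx] using hv) fun y ↦ ?_)
    have hy : l y = 0 := y.2
    simpa [hy] using hp (y, 0)
  obtain ⟨s, hs⟩ := LinearMap.surjective hl 1
  subst hx0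
  have ha : a = 0 := by simpa [hs] using hp (s, 0)
  rw [ha]
  rfl

theorem QuadNondeg.of_hyperbolicExt {Q : QuadraticForm F U} {l : U →ₗ[F] F} (hl : l ≠ 0)
    (hQ : QuadNondeg (_root_.hyperbolicExt Q l)) :
    QuadNondeg (Q.comp (LinearMap.ker l).subtype) := by
  obtain ⟨s, hs⟩ := LinearMap.surjective hl 1
  rintro ⟨x, hx⟩ hv hp
  have hx' : l x = 0 := hx
  have hv' : Q x = 0 := by simpa using hv
  have hzero := hQ (x, -QuadraticMap.polar Q x s) (by simp [hv', hx']) fun y ↦ by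
    have hy := hp ⟨y.1 - l y.1 • s, by simp [hs]⟩
    rw [polar_comp_subtype] at hy
    simp only [sub_eq_add_neg, ← neg_smul, QuadraticMap.polar_add_right,
      QuadraticMap.polar_smul_right, smul_eq_mul] at hy
    simp only [polar_hyperbolicExt, hx']
    linear_combination hy
  exact Subtype.ext (congrArg Prod.fst hzero)

theorem LinearMap.ne_zero_of_quadNondeg_hyperbolicExt {Q : QuadraticForm F U} {l : U →ₗ[F] F}
    (hQ : QuadNondeg (hyperbolicExt Q l)) : l ≠ 0 := by
  rintro rfl
  simpa using hQ (0, 1) (by simp) (by simp)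

/-- The cone with vertex `(0, 1)` over a subspace of `ker l`. -/
def coneOver {H : Submodule F U} (G : Submodule F H) : Submodule F (U × F) :=
  LinearMap.range ((H.subtype ∘ₗ G.subtype).prodMap (LinearMap.id : F →ₗ[F] F))

theorem mem_coneOver {H : Submodule F U} {G : Submodule F H} {v : U × F} :
    v ∈ coneOver G ↔ ∃ h : v.1 ∈ H, (⟨v.1, h⟩ : H) ∈ G := by
  constructor
  · rintro ⟨⟨g, a⟩, rfl⟩
    exact ⟨g.1.2, g.2⟩
  · rintro ⟨h, hG⟩
    exact ⟨(⟨⟨v.1, h⟩, hG⟩, v.2), rfl⟩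

theorem finrank_coneOver [FiniteDimensional F U] {H : Submodule F U} (G : Submodule F H) :
    finrank F (coneOver G) = finrank F G + 1 := by
  rw [coneOver, LinearMap.finrank_range_of_inj, Module.finrank_prod, Module.finrank_self]
  rw [LinearMap.coe_prodMap]
  exact (Subtype.val_injective.comp Subtype.val_injective).prodMap Function.injective_id

theorem IsTotallySingular.coneOver {Q : QuadraticForm F U} {l : U →ₗ[F] F}
    {G : Submodule F (LinearMap.ker l)}
    (hG : IsTotallySingular (Q.comp (LinearMap.ker l).subtype) G) :
    IsTotallySingular (hyperbolicExt Q l) (coneOver G) := by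
  intro v hv
  obtain ⟨h, hvG⟩ := mem_coneOver.1 hv
  have h0 : Q v.1 = 0 := hG _ hvG
  simp [h0, LinearMap.mem_ker.1 h]

/-- The linear section of `U × F → U` whose values on a subspace `S` containing `s` are singular,
provided `l s = 1` and `S ⊓ ker l` is totally singular. -/
def singularLift (Q : QuadraticForm F U) (l : U →ₗ[F] F) (s : U) : U →ₗ[F] U × F :=
  LinearMap.id.prod (Q s • l - Q.polarBilin s)

theorem singularLift_injective (Q : QuadraticForm F U) (l : U →ₗ[F] F) (s : U) :
    Function.Injective (singularLift Q l s) := fun _ _ h ↦ congrArg Prod.fst h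

theorem isTotallySingular_map_singularLift {Q : QuadraticForm F U} {l : U →ₗ[F] F}
    {S : Submodule F U} {s : U} (hs : s ∈ S) (hls : l s = 1)
    (hS : IsTotallySingular (Q.comp (LinearMap.ker l).subtype)
      (S.comap (LinearMap.ker l).subtype)) :
    IsTotallySingular (hyperbolicExt Q l) (S.map (singularLift Q l s)) := by
  rintro _ ⟨x, hx, rfl⟩
  have h0 : Q (x + (-l x) • s) = 0 :=
    hS ⟨x + (-l x) • s, by simp [hls]⟩ (S.add_mem hx (S.smul_mem _ hs))
  rw [QuadraticMap.map_add Q, QuadraticMap.map_smul, QuadraticMap.polar_smul_right,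
    QuadraticMap.polar_comm] at h0
  simp only [smul_eq_mul] at h0
  simp [singularLift]
  linear_combination h0

theorem Submodule.finrank_map_of_injective {V W : Type*} [AddCommGroup V] [Module F V]
    [AddCommGroup W] [Module F W] {f : V →ₗ[F] W} (hf : Function.Injective f)
    (S : Submodule F V) : finrank F (S.map f) = finrank F S :=
  (Submodule.equivMapOfInjective f hf S).finrank_eq.symm

theorem exists_linearEquiv_prod_apply_eq [FiniteDimensional F U] {V : Type*}
    [AddCommGroup V] [Module F V] [FiniteDimensional F V] (hdim : finrank F V = finrank F U + 1) {u : V} (hu : u ≠ 0) :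
    ∃ e : (U × F) ≃ₗ[F] V, e (0, 1) = u := by
  obtain ⟨C, hC⟩ := Submodule.exists_isCompl (F ∙ u)
  have h := Submodule.finrank_add_eq_of_isCompl hC
  rw [finrank_span_singleton hu] at h
  refine ⟨((LinearEquiv.ofFinrankEq U C (by omega)).prodCongr
    (LinearEquiv.toSpanNonzeroSingleton F V u hu)).trans
      (Submodule.prodEquivOfIsCompl C (F ∙ u) hC.symm), ?_⟩
  simp

theorem exists_ker_eq_and_comp_subtype_eq [FiniteDimensional F U] {H : Submodule F U}
    (hH : finrank F H + 1 = finrank F U) (Q : QuadraticForm F H) :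
    ∃ (l : U →ₗ[F] F) (Q₀ : QuadraticForm F U),
      l ≠ 0 ∧ LinearMap.ker l = H ∧ Q = Q₀.comp H.subtype := by
  obtain ⟨l, hl, hle⟩ := Submodule.exists_le_ker_of_lt_top H (lt_top_iff_ne_top.2 fun h ↦ by
    rw [h, finrank_top] at hH
    omega)
  obtain ⟨p, hp⟩ := LinearMap.exists_leftInverse_of_injective H.subtype H.ker_subtype
  refine ⟨l, Q.comp p, hl, (Submodule.eq_of_le_of_finrank_eq hle ?_).symm, ?_⟩
  · have := finrank_ker_add_one hl
    omega
  · ext x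
    exact congrArg Q (LinearMap.congr_fun hp x).symm

end HyperbolicExtension

section Equivalence

variable {F : Type*} [Field F] [Fintype F] {U : Type*} [AddCommGroup U] [Module F U]

theorem IsAvsp.eq_of_mem {H : Submodule F U} {Q : QuadraticForm F H}
    {Pgen : Submodule F H} {P : Set (Submodule F U)} {e r : ℕ} (hP : IsAvsp e r H Q Pgen P)
    {S T : Submodule F U} (hS : S ∈ P) (hT : T ∈ P) {x : U} (hx : x ∉ H) (hxS : x ∈ S)
    (hxT : x ∈ T) : S = T := by
  obtain ⟨-, -, hpart, -⟩ := hP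
  have hx0 : x ≠ 0 := by
    rintro rfl
    exact hx H.zero_mem
  exact (hpart (F ∙ x) (finrank_span_singleton hx0) (by simpa using hx)).unique
    ⟨hS, by simpa using hxS⟩ ⟨hT, by simpa using hxT⟩

theorem IsAvsp.exists_isSpread [FiniteDimensional F U] (hU : finrank F U = 7)
    {Q : QuadraticForm F U} {l : U →ₗ[F] F} (hl : l ≠ 0) (hQ : QuadNondeg (Q.comp (LinearMap.ker l).subtype))
    (hw : finrank F (LinearMap.ker l) = 2 * wittIndex (Q.comp (LinearMap.ker l).subtype))
    {Pgen : Submodule F (LinearMap.ker l)}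
    (hgen : IsGenerator (Q.comp (LinearMap.ker l).subtype) Pgen) {P : Set (Submodule F U)}
    (hP : IsAvsp 0 5 (LinearMap.ker l) (Q.comp (LinearMap.ker l).subtype) Pgen P) :
    wittIndex (hyperbolicExt Q l) = 4 ∧ ∃ S, IsSpread (hyperbolicExt Q l) S := by
  have huniq := fun S (hS : S ∈ P) T (hT : T ∈ P) x ↦
    IsAvsp.eq_of_mem hP hS hT (x := x)
  obtain ⟨hcard, hdim, hpart, hPgen, -, hinter, -⟩ := hP
  norm_num at hcard hdim
  have hH := finrank_ker_add_one hl
  have hQ' := hQ.hyperbolicExt hl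
  have hV : finrank F (U × F) = 8 := by rw [Module.finrank_prod, Module.finrank_self, hU]
  have hTS₀ := hgen.1.coneOver
  have hd₀ : finrank F (coneOver Pgen) = 4 := by
    rw [finrank_coneOver, hgen.2]; omega
  have hw' : wittIndex (hyperbolicExt Q l) = 4 := by
    rw [hQ'.wittIndex_eq hTS₀ (by omega), hd₀]
  choose! s hsS hls using fun S (hS : S ∈ P) ↦ exists_apply_eq_one (hdim S hS).2
  let lift : Submodule F U → Submodule F (U × F) := fun S ↦ S.map (singularLift Q l (s S))
  have hTS : ∀ S ∈ P, IsTotallySingular (hyperbolicExt Q l) (lift S) := fun S hS ↦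
    isTotallySingular_map_singularLift (hsS S hS) (hls S hS) (hPgen S hS).1.1
  have hd : ∀ S ∈ P, finrank F (lift S) = 4 := fun S hS ↦ by
    rw [Submodule.finrank_map_of_injective (singularLift_injective _ _ _), (hdim S hS).1]
  have hdisj₀ : ∀ S ∈ P, lift S ⊓ coneOver Pgen = ⊥ := by
    intro S hS
    rw [eq_bot_iff]
    rintro _ ⟨⟨x, hx, rfl⟩, hx₀⟩
    obtain ⟨h, hxG⟩ := mem_coneOver.1 hx₀
    have hmem : (⟨x, h⟩ : LinearMap.ker l) ∈ S.comap (LinearMap.ker l).subtype ⊓ Pgen := ⟨hx, hxG⟩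
    rw [(hPgen S hS).2, Submodule.mem_bot] at hmem
    have hx0 : x = 0 := congrArg Subtype.val hmem
    simp [hx0]
  have hdisj : ∀ S ∈ P, ∀ T ∈ P, S ≠ T → lift S ⊓ lift T = ⊥ := by
    intro S hS T hT hne
    rw [eq_bot_iff]
    rintro v ⟨hvS, hvT⟩
    have hvl : l v.1 = 0 := by
      by_contra hv
      obtain ⟨x, hx, rfl⟩ := hvS
      obtain ⟨y, hy, hxy⟩ := hvT
      have hyx : y = x := congrArg Prod.fst hxy
      exact hne (huniq S hS T hT x hv hx (hyx ▸ hy))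
    have hsup : S ⊔ T = ⊤ := by
      refine Submodule.eq_top_of_finrank_eq (le_antisymm (Submodule.finrank_le _) ?_)
      have h1 := Submodule.finrank_sup_add_finrank_inf_eq S T
      have h2 := hinter S hS T hT hne
      have h3 := (hdim S hS).1
      have h4 := (hdim T hT).1
      omega
    refine hQ' v (hTS S hS v hvS) fun w ↦ ?_
    obtain ⟨y, hy, z, hz, hyz⟩ := Submodule.mem_sup.1 (hsup ▸ Submodule.mem_top : w.1 ∈ S ⊔ T)
    have hw : w = singularLift Q l (s S) y + singularLift Q l (s T) z +
        (0, w.2 - (singularLift Q l (s S) y).2 - (singularLift Q l (s T) z).2) := by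
      ext
      · simp [singularLift, hyz]
      · simp
    rw [hw, QuadraticMap.polar_add_right, QuadraticMap.polar_add_right,
      (hTS S hS).polar_eq_zero hvS ⟨y, hy, rfl⟩, (hTS T hT).polar_eq_zero hvT ⟨z, hz, rfl⟩]
    simp [hvl]
  have hinj : Set.InjOn lift P := by
    intro S hS T hT heq
    by_contra hne
    have h := hdisj S hS T hT hne
    rw [← heq, inf_idem] at h
    have := hd S hS
    rw [h, finrank_bot] at this
    omega
  refine ⟨hw', insert (coneOver Pgen) (lift '' P), ?_, ?_, ?_⟩
  · rintro G (rfl | ⟨S, hS, rfl⟩)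
    · exact ⟨hTS₀, by rw [hd₀, hw']⟩
    · exact ⟨hTS S hS, by rw [hd S hS, hw']⟩
  · rintro G (rfl | ⟨S, hS, rfl⟩) G' (rfl | ⟨T, hT, rfl⟩) hne
    · exact absurd rfl hne
    · rw [inf_comm, hdisj₀ T hT]
    · exact hdisj₀ S hS
    · exact hdisj S hS T hT (by rintro rfl; exact hne rfl)
  · intro v hv
    by_cases hv₀ : v ∈ coneOver Pgen
    · exact ⟨_, Set.mem_insert _ _, hv₀⟩
    · obtain ⟨G, hG, hvG⟩ := hQ'.mem_of_ncard_eq hV hTS₀ hd₀ (T := lift '' P)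
        (by rw [hinj.ncard_image, hcard])
        (by rintro _ ⟨S, hS, rfl⟩; exact ⟨hTS S hS, hd S hS, hdisj₀ S hS⟩)
        (by
          rintro _ ⟨S, hS, rfl⟩ _ ⟨T, hT, rfl⟩ hne
          exact hdisj S hS T hT (by rintro rfl; exact hne rfl)) hv hv₀
      exact ⟨G, Set.mem_insert_of_mem _ hG, hvG⟩

theorem IsSpread.exists_isAvsp [FiniteDimensional F U] (hU : finrank F U = 7)
    {Q : QuadraticForm F U} {l : U →ₗ[F] F} (hQ' : QuadNondeg (hyperbolicExt Q l)) (hw' : wittIndex (hyperbolicExt Q l) = 4)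
    {R : Set (Submodule F (U × F))} (hR : IsSpread (hyperbolicExt Q l) R) :
    ∃ (Pgen : Submodule F (LinearMap.ker l)) (P : Set (Submodule F U)),
      finrank F (LinearMap.ker l) = 2 * wittIndex (Q.comp (LinearMap.ker l).subtype) ∧
      IsGenerator (Q.comp (LinearMap.ker l).subtype) Pgen ∧
      IsAvsp 0 5 (LinearMap.ker l) (Q.comp (LinearMap.ker l).subtype) Pgen P := by
  obtain ⟨hRgen, hRdisj, hRcov⟩ := hR
  have hl := LinearMap.ne_zero_of_quadNondeg_hyperbolicExt hQ'
  have hQ := hQ'.of_hyperbolicExt hl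
  have hH := finrank_ker_add_one hl
  have hV : finrank F (U × F) = 8 := by rw [Module.finrank_prod, Module.finrank_self, hU]
  have hd : ∀ G ∈ R, finrank F G = 4 := fun G hG ↦ (hRgen G hG).2.trans hw'
  obtain ⟨G₀, hG₀, hu₀⟩ := hRcov (0, 1) (by simp)
  have hperp : ∀ v ∈ G₀, l v.1 = 0 := fun v hv ↦ by
    simpa using (hRgen G₀ hG₀).1.polar_eq_zero hv hu₀
  let Pgen : Submodule F (LinearMap.ker l) :=
    G₀.comap (LinearMap.inl F U F ∘ₗ (LinearMap.ker l).subtype)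
  have hcone : coneOver Pgen = G₀ := by
    have haux : ∀ v : U × F, (v.1, 0) ∈ G₀ ↔ v ∈ G₀ := fun v ↦ by
      have hv : v = (v.1, 0) + v.2 • (0, 1) := by ext <;> simp
      conv_rhs => rw [hv]
      exact (G₀.add_mem_iff_left (G₀.smul_mem _ hu₀)).symm
    ext v
    rw [mem_coneOver]
    exact ⟨fun ⟨_, h⟩ ↦ (haux v).1 h, fun h ↦ ⟨hperp v h, (haux v).2 h⟩⟩
  have hPd : finrank F Pgen = 3 := by
    have h1 := finrank_coneOver Pgen
    rw [hcone, hd G₀ hG₀] at h1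
    omega
  have hPTS : IsTotallySingular (Q.comp (LinearMap.ker l).subtype) Pgen := fun x hx ↦ by
    simpa using (hRgen G₀ hG₀).1 _ hx
  have hw : wittIndex (Q.comp (LinearMap.ker l).subtype) = 3 := by
    rw [hQ.wittIndex_eq hPTS (by omega), hPd]
  let P : Set (Submodule F U) := (fun G ↦ G.map (LinearMap.fst F U F)) '' (R \ {G₀})
  have hmem : ∀ {G v}, G ∈ R → G ≠ G₀ → v ∈ G → v ∈ G₀ → v = 0 := fun {G v} hG hne hv hv₀ ↦ by
    have h : v ∈ G ⊓ G₀ := ⟨hv, hv₀⟩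
    rwa [hRdisj G hG G₀ hG₀ hne] at h
  have hSd : ∀ S ∈ P, finrank F S = 4 := by
    rintro _ ⟨G, ⟨hG, hne⟩, rfl⟩
    rw [← hd G hG]
    refine LinearMap.finrank_range_of_inj (f := LinearMap.fst F U F ∘ₗ G.subtype) ?_ ▸ ?_
    · rw [← LinearMap.ker_eq_bot, LinearMap.ker_eq_bot']
      rintro ⟨⟨x, a⟩, hv⟩ hx
      have hx' : x = 0 := hx
      subst hx'
      have hva : ((0, a) : U × F) ∈ G₀ := by
        have := G₀.smul_mem a hu₀
        simpa using this
      exact Subtype.ext (hmem hG hne hv hva)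
    · rw [LinearMap.range_comp, Submodule.range_subtype]
  have hSH : ∀ S ∈ P, ¬ S ≤ LinearMap.ker l := by
    rintro _ ⟨G, ⟨hG, hne⟩, rfl⟩ hle
    have hu : ((0, 1) : U × F) ∈ G := by
      refine hQ'.mem_of_polar_eq_zero (hRgen G hG).1 (by rw [hV, hd G hG]) fun g hg ↦ ?_
      have : l g.1 = 0 := hle ⟨g, hg, rfl⟩
      simpa using this
    simpa using hmem hG hne hu hu₀
  have hsup : ∀ S ∈ P, ∀ T ∈ P, S ≠ T → S ⊔ T = ⊤ := by
    rintro _ ⟨G, ⟨hG, -⟩, rfl⟩ _ ⟨G', ⟨hG', -⟩, rfl⟩ hne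
    have hGG : G ⊔ G' = ⊤ := by
      refine Submodule.eq_top_of_finrank_eq ?_
      have h := Submodule.finrank_sup_add_finrank_inf_eq G G'
      rw [hRdisj G hG G' hG' (by rintro rfl; exact hne rfl), finrank_bot, hd G hG,
        hd G' hG'] at h
      omega
    rw [← Submodule.map_sup, hGG, Submodule.map_top, Submodule.range_fst]
  have hinf : ∀ S ∈ P, ∀ T ∈ P, S ≠ T → finrank F (S ⊓ T : Submodule F U) = 1 := by
    intro S hS T hT hne
    have h := Submodule.finrank_sup_add_finrank_inf_eq S T
    rw [hsup S hS T hT hne, finrank_top, hU, hSd S hS, hSd T hT] at h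
    omega
  have hSd' : ∀ S ∈ P, finrank F (S.comap (LinearMap.ker l).subtype) = 3 := by
    intro S hS
    have h := finrank_inf_add_one_of_not_le hH (hSH S hS)
    rw [← Submodule.finrank_map_subtype_eq, Submodule.map_comap_subtype, inf_comm]
    rw [hSd S hS] at h
    omega
  have hpart : ∀ x ∉ LinearMap.ker l, ∃! S, S ∈ P ∧ x ∈ S := by
    intro x hx
    rw [LinearMap.mem_ker] at hx
    have hv : hyperbolicExt Q l (x, -(Q x / l x)) = 0 := by
      simp
      field_simp
      ring
    have hlift : ∀ G ∈ R, ∀ a, (x, a) ∈ G → a = -(Q x / l x) := by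
      intro G hG a ha
      have h := (hRgen G hG).1 _ ha
      simp only [hyperbolicExt_apply] at h
      field_simp
      linear_combination h
    obtain ⟨G, hG, hvG⟩ := hRcov _ hv
    refine ⟨G.map (LinearMap.fst F U F), ⟨⟨G, ⟨hG, ?_⟩, rfl⟩, ⟨_, hvG, rfl⟩⟩, ?_⟩
    · rintro rfl
      exact hx (hperp _ hvG)
    · rintro _ ⟨⟨G', ⟨hG', -⟩, rfl⟩, ⟨⟨y, a⟩, hy, hyx⟩⟩
      have hyx' : y = x := hyx
      subst hyx'
      have hGG : G' = G := by
        by_contra hne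
        have h : (y, a) ∈ G' ⊓ G := ⟨hy, hlift G' hG' a hy ▸ hvG⟩
        rw [hRdisj G' hG' G hG hne] at h
        have hy0 : y = 0 := congrArg Prod.fst ((Submodule.mem_bot F).1 h)
        simp [hy0] at hx
      rw [hGG]
  refine ⟨Pgen, P, by omega, ⟨hPTS, by omega⟩, ?_, ?_, ?_, ?_, ?_, ?_, ?_⟩
  · exact ncard_eq_of_partition hU (by omega) (fun S hS ↦ ⟨hSd S hS, hSH S hS⟩) hpart
  · exact fun S hS ↦ ⟨hSd S hS, hSH S hS⟩
  · intro L hL hLH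
    obtain ⟨x, hxL, hx⟩ := SetLike.not_le_iff_exists.1 hLH
    have hx0 : x ≠ 0 := by
      rintro rfl
      exact hx (Submodule.zero_mem _)
    have hspan : F ∙ x = L := Submodule.eq_of_le_of_finrank_eq (by simpa using hxL)
      (by rw [finrank_span_singleton hx0, hL])
    simpa [← hspan] using hpart x hx
  · intro S hS
    refine ⟨⟨?_, by rw [hSd' S hS, hw]⟩, ?_⟩
    · obtain ⟨G, ⟨hG, -⟩, rfl⟩ := hS
      rintro x ⟨v, hv, hvx⟩
      have h := (hRgen G hG).1 v hv
      have hvx' : v.1 = x := hvx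
      have hx : l x = 0 := x.2
      simpa [hvx', hx] using h
    · obtain ⟨G, ⟨hG, hne⟩, rfl⟩ := hS
      rw [eq_bot_iff]
      rintro x ⟨⟨v, hv, hvx⟩, hx₀⟩
      have hvx' : v.1 = x := hvx
      have hv₀ : v ∈ G₀ := by
        rw [← hcone]
        refine mem_coneOver.2 ⟨hvx' ▸ x.2, ?_⟩
        rwa [show (⟨v.1, hvx' ▸ x.2⟩ : LinearMap.ker l) = x from Subtype.ext hvx']
      have hv0 := hmem hG hne hv hv₀
      refine (Submodule.mem_bot F).2 (Subtype.ext ?_)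
      rw [← hvx', hv0]
      rfl
  · intro S hS T hT hne heq
    have h1 := hinf S hS T hT hne
    have h2 := finrank_inf_add_one_of_not_le hH (hSH S hS)
    have h3 : S ⊓ LinearMap.ker l ≤ S ⊓ T := by
      refine fun x hx ↦ ⟨hx.1, ?_⟩
      have h : (⟨x, hx.2⟩ : LinearMap.ker l) ∈ S.comap (LinearMap.ker l).subtype := hx.1
      rw [heq] at h
      exact h
    have h4 := Submodule.finrank_mono h3
    have h5 := hSd S hS
    omega
  · exact fun S hS T hT hne ↦ (hinf S hS T hT hne).le
  · intro S hS T hT hne _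
    rw [hsup S hS T hT hne, Submodule.comap_top]
    refine ⟨hQ.comp_equiv Submodule.topEquiv, ?_⟩
    have hwtop := wittIndex_comp_equiv (Q.comp (LinearMap.ker l).subtype) Submodule.topEquiv
    rw [finrank_top]
    refine Eq.trans ?_ (congrArg (2 * ·) (hwtop.trans hw).symm)
    omega

end Equivalence

theorem hyperbolic_avsp_dim7_iff_triality_spread {F : Type*} [Field F] [Fintype F] :
    (∃ (H : Submodule F (Fin 7 → F)) (Q : QuadraticForm F ↥H)
        (Pgen : Submodule F ↥H) (P : Set (Submodule F (Fin 7 → F))),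
      Module.finrank F ↥H = 6 ∧ QuadNondeg Q ∧
      Module.finrank F ↥H = 2 * wittIndex Q ∧
      IsGenerator Q Pgen ∧ IsAvsp 0 5 H Q Pgen P) ↔
    (∃ Q' : QuadraticForm F (Fin 8 → F),
      QuadNondeg Q' ∧
      Module.finrank F (Fin 8 → F) = 2 * wittIndex Q' ∧
      ∃ S : Set (Submodule F (Fin 8 → F)), IsSpread Q' S) := by
  constructor
  · rintro ⟨H, Q, Pgen, P, hH, hQ, hw, hgen, hP⟩
    obtain ⟨l, Q₀, hl, rfl, rfl⟩ := exists_ker_eq_and_comp_subtype_eq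
      (by rw [hH, Module.finrank_fin_fun]) Q
    obtain ⟨hw', S, hS⟩ := hP.exists_isSpread (Module.finrank_fin_fun F) hl hQ hw hgen
    let e : (Fin 8 → F) ≃ₗ[F] (Fin 7 → F) × F := LinearEquiv.ofFinrankEq _ _ (by simp)
    refine ⟨_, (hQ.hyperbolicExt hl).comp_equiv e, ?_, _, hS.comap_equiv e⟩
    rw [wittIndex_comp_equiv, hw', Module.finrank_fin_fun]
  · rintro ⟨Q', hQ', hw', S, hS⟩
    have hw : wittIndex Q' = 4 := by
      rw [Module.finrank_fin_fun] at hw'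
      omega
    obtain ⟨G, hG⟩ := exists_isGenerator Q'
    have hG0 : G ≠ ⊥ := by
      rintro rfl
      have := hG.2
      rw [finrank_bot] at this
      omega
    obtain ⟨u, huG, hu⟩ := Submodule.exists_mem_ne_zero_of_ne_bot hG0
    obtain ⟨e, rfl⟩ := exists_linearEquiv_prod_apply_eq (F := F) (U := Fin 7 → F) (by simp) hu
    have hQe := hQ'.comp_equiv e
    have hwe := (wittIndex_comp_equiv Q' e).trans hw
    have hSe := hS.comap_equiv e
    obtain ⟨Q₀, l, hext⟩ := eq_hyperbolicExt
      (Q := Q'.comp (e : ((Fin 7 → F) × F) →ₗ[F] (Fin 8 → F))) (by simpa using hG.1 _ huG)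
    rw [hext] at hQe hwe hSe
    have hl := LinearMap.ne_zero_of_quadNondeg_hyperbolicExt hQe
    obtain ⟨Pgen, P, hwP, hgen, hP⟩ := hSe.exists_isAvsp (Module.finrank_fin_fun F) hQe hwe
    refine ⟨LinearMap.ker l, _, Pgen, P, ?_, hQe.of_hyperbolicExt hl, hwP, hgen, hP⟩
    have := finrank_ker_add_one hl
    rw [Module.finrank_fin_fun] at this
    omega
end

section
/- Let e ∈ {0,1,2}, let r ≡ e+1 (mod 2), let U be an F-vector space of dimension r+2, H a hyperplane of U, Q a nondegenerate quadratic form on H of Witt defect e, Π a generator of Q, and let P be a hyperbolic, parabolic or elliptic avsp for (U, H, Q, Π) (according as e = 0, 1 or 2). Then P is tight: the intersection of all members of P is the zero subspace; in particular, no 1-dimensional subspace of U is contained in every member of P. -/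
open Module Submodule

/-- Distinct members of a family of `n`-dimensional subspaces of `K` that pairwise meet inside a
common subspace `Z` have disjoint complements of `Z`, which bounds the size of the family. -/
theorem card_mul_sub_add_le_of_inf_le {F V ι : Type*} [Field F] [Fintype F] [AddCommGroup V]
    [Module F V] [FiniteDimensional F V] (s : Finset ι) (W : ι → Submodule F V)
    (Z K : Submodule F V) (n : ℕ) (hn : ∀ i ∈ s, finrank F (W i) = n) (hZ : ∀ i ∈ s, Z ≤ W i)
    (hZK : Z ≤ K) (hK : ∀ i ∈ s, W i ≤ K) (hW : ∀ i ∈ s, ∀ j ∈ s, i ≠ j → W i ⊓ W j ≤ Z) :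
    s.card * (Fintype.card F ^ n - Fintype.card F ^ finrank F Z) + Fintype.card F ^ finrank F Z ≤
      Fintype.card F ^ finrank F K := by
  classical
  have : Finite V := Module.finite_of_finite F
  have := Fintype.ofFinite V
  have hcard (X : Submodule F V) :
      (X : Set V).toFinset.card = Fintype.card F ^ finrank F X := by
    rw [Set.toFinset_card, ← Module.card_eq_pow_finrank (K := F) (V := X)]
    exact Fintype.card_congr (Equiv.refl _)
  have hdisj : Set.PairwiseDisjoint (s : Set ι)
      fun i => (W i : Set V).toFinset \ (Z : Set V).toFinset := by
    intro i hi j hj hij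
    rw [Function.onFun, Finset.disjoint_left]
    intro x hx hx'
    simp only [Finset.mem_sdiff, Set.mem_toFinset, SetLike.mem_coe] at hx hx'
    exact hx.2 (hW i hi j hj hij ⟨hx.1, hx'.1⟩)
  have hunion : (s.biUnion fun i => (W i : Set V).toFinset \ (Z : Set V).toFinset).card =
      s.card * (Fintype.card F ^ n - Fintype.card F ^ finrank F Z) := by
    rw [Finset.card_biUnion hdisj, Finset.sum_const_nat]
    intro i hi
    rw [Finset.card_sdiff_of_subset (Set.toFinset_subset_toFinset.2 (hZ i hi)), hcard, hcard,
      hn i hi]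
  rw [← hunion, ← hcard Z, ← hcard K, ← Finset.card_union_of_disjoint]
  · refine Finset.card_le_card fun x hx => ?_
    simp only [Finset.mem_union, Finset.mem_biUnion, Finset.mem_sdiff, Set.mem_toFinset,
      SetLike.mem_coe] at hx ⊢
    rcases hx with ⟨i, hi, hx, -⟩ | hx
    exacts [hK i hi hx, hZK hx]
  · rw [Finset.disjoint_left]
    intro x hx
    simp only [Finset.mem_biUnion, Finset.mem_sdiff] at hx
    obtain ⟨i, -, -, hx⟩ := hx
    exact hx

theorem IsTotallySingular.le_vecPerp {F V : Type*} [Field F] [AddCommGroup V] [Module F V]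
    {Q : QuadraticForm F V} {W : Submodule F V} (hW : IsTotallySingular Q W) {z : V}
    (hz : z ∈ W) : W ≤ vecPerp Q z := by
  intro x hx
  simp [vecPerp, QuadraticMap.polar, hW _ (W.add_mem hz hx), hW z hz, hW x hx]

theorem QuadNondeg.finrank_vecPerp_add_one {F V : Type*} [Field F] [AddCommGroup V] [Module F V]
    [FiniteDimensional F V] {Q : QuadraticForm F V} (hQ : QuadNondeg Q) {z : V} (hz : Q z = 0)
    (hz0 : z ≠ 0) : finrank F (vecPerp Q z) + 1 = finrank F V := by
  refine Module.Dual.finrank_ker_add_one_of_ne_zero fun h => hz0 (hQ z hz fun x => ?_)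
  simpa using LinearMap.congr_fun h x

theorem pow_lt_mul_sub_add {q w e : ℕ} (hq : 2 ≤ q) (hw : 2 ≤ w) :
    q ^ (2 * w + e - 1) < q ^ (w + e) * (q ^ w - q) + q := by
  obtain ⟨k, rfl⟩ := Nat.exists_eq_add_of_le hw
  have h1 : q ^ (k + 1) ≤ q ^ (2 + k) - q := by
    have h2 : q ≤ q ^ (k + 1) := Nat.le_self_pow (by omega) q
    have h3 : q ^ (2 + k) = q ^ (k + 1) * q := by ring
    have h4 : q ^ (k + 1) * 2 ≤ q ^ (k + 1) * q := Nat.mul_le_mul_left _ hq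
    omega
  calc q ^ (2 * (2 + k) + e - 1) = q ^ (2 + k + e) * q ^ (k + 1) := by
        rw [← pow_add]; congr 1; omega
    _ ≤ q ^ (2 + k + e) * (q ^ (2 + k) - q) := Nat.mul_le_mul_left _ h1
    _ < _ := by omega

/-- A family of `q ^ (dim V - w)` distinct generators of dimension `w` cannot pairwise meet in the
line through a common nonzero singular vector. -/
theorem eq_zero_of_forall_mem_generator {F V ι : Type*} [Field F] [Fintype F] [AddCommGroup V]
    [Module F V] [FiniteDimensional F V] {Q : QuadraticForm F V} (hQ : QuadNondeg Q) {e : ℕ}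
    (hdef : finrank F V = 2 * wittIndex Q + e) (s : Finset ι) (G : ι → Submodule F V)
    (hcard : s.card = Fintype.card F ^ (wittIndex Q + e)) (hs : 1 < s.card)
    (hG : ∀ i ∈ s, IsGenerator Q (G i)) (hinj : ∀ i ∈ s, ∀ j ∈ s, i ≠ j → G i ≠ G j)
    {z : V} (hz : ∀ i ∈ s, z ∈ G i)
    (hinf : ∀ i ∈ s, ∀ j ∈ s, i ≠ j → G i ⊓ G j ≤ span F {z}) : z = 0 := by
  by_contra hz0
  obtain ⟨i, hi, j, hj, hij⟩ := Finset.one_lt_card.1 hs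
  have hle : ∀ k ∈ s, span F {z} ≤ G k := fun k hk => by simpa using hz k hk
  have hZ : finrank F (span F {z}) = 1 := finrank_span_singleton hz0
  have hw : 2 ≤ wittIndex Q := by
    by_contra! hw
    have heq : ∀ k ∈ s, span F {z} = G k := fun k hk =>
      eq_of_le_of_finrank_le (hle k hk) (by rw [(hG k hk).2, hZ]; omega)
    exact hinj i hi j hj hij ((heq i hi).symm.trans (heq j hj))
  have hperp := hQ.finrank_vecPerp_add_one ((hG i hi).1 z (hz i hi)) hz0
  have hKle : ∀ k ∈ s, G k ≤ vecPerp Q z := fun k hk => (hG k hk).1.le_vecPerp (hz k hk)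
  have hcount := card_mul_sub_add_le_of_inf_le s G (span F {z}) (vecPerp Q z) (wittIndex Q)
    (fun k hk => (hG k hk).2) hle ((hle i hi).trans (hKle i hi)) hKle hinf
  rw [hZ, pow_one, hcard, show finrank F (vecPerp Q z) = 2 * wittIndex Q + e - 1 by omega]
    at hcount
  exact absurd hcount (pow_lt_mul_sub_add Fintype.one_lt_card hw).not_ge


theorem avsp_is_tight {F : Type*} [Field F] [Fintype F] (e r : ℕ)
    (he : e = 0 ∨ e = 1 ∨ e = 2) (hmod : r % 2 = (e + 1) % 2)
    (U : Type*) [AddCommGroup U] [Module F U] [FiniteDimensional F U]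
    (hU : Module.finrank F U = r + 2)
    (H : Submodule F U) (hH : Module.finrank F ↥H = r + 1)
    (Q : QuadraticForm F ↥H) (hQnd : QuadNondeg Q)
    (hdef : Module.finrank F ↥H = 2 * wittIndex Q + e)
    (Pgen : Submodule F ↥H) (hPgen : IsGenerator Q Pgen)
    (P : Set (Submodule F U)) (hP : IsAvsp e r H Q Pgen P) :
    sInf P = ⊥ ∧
    ∀ L : Submodule F U, Module.finrank F ↥L = 1 → ∃ S ∈ P, ¬ L ≤ S := by
  classical
  obtain ⟨hcard, -, huniq, hgen, hinj, hinf, -⟩ := hP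
  have hexp : (r + e + 1) / 2 = wittIndex Q + e := by omega
  rw [hexp] at hcard
  have hm : 1 < P.ncard := by
    rw [hcard]
    exact Nat.one_lt_pow (by omega) Fintype.one_lt_card
  have hfin : P.Finite := Set.finite_of_ncard_pos (by omega)
  have hbot : sInf P = ⊥ := by
    rw [eq_bot_iff]
    intro v hv
    rw [mem_sInf] at hv
    rw [mem_bot]
    by_contra hv0
    obtain ⟨S, hS, T, hT, hST⟩ := (Set.one_lt_ncard hfin).1 hm
    have hvH : v ∈ H := by
      by_contra hvH
      have hu := huniq (span F {v}) (finrank_span_singleton hv0) (by simpa using hvH)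
      exact hST (hu.unique ⟨hS, by simpa using hv S hS⟩ ⟨hT, by simpa using hv T hT⟩)
    have hz : (⟨v, hvH⟩ : H) = 0 := by
      rw [Set.ncard_eq_toFinset_card P hfin] at hcard hm
      refine eq_zero_of_forall_mem_generator hQnd hdef hfin.toFinset
        (fun S => S.comap H.subtype) hcard hm ?_ ?_ ?_ ?_
      · exact fun A hA => (hgen A (hfin.mem_toFinset.1 hA)).1
      · exact fun A hA B hB => hinj A (hfin.mem_toFinset.1 hA) B (hfin.mem_toFinset.1 hB)
      · exact fun A hA => hv A (hfin.mem_toFinset.1 hA)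
      · intro A hA B hB hAB x hx
        rw [hfin.mem_toFinset] at hA hB
        have hvAB : span F {v} = A ⊓ B := by
          refine eq_of_le_of_finrank_le ?_ ?_
          · simpa using And.intro (hv A hA) (hv B hB)
          · rw [finrank_span_singleton hv0]
            exact hinf A hA B hB hAB
        have hxv : (x : U) ∈ span F {v} := hvAB ▸ hx
        obtain ⟨c, hc⟩ := mem_span_singleton.1 hxv
        exact mem_span_singleton.2 ⟨c, Subtype.ext hc⟩
    exact hv0 (congrArg Subtype.val hz)
  refine ⟨hbot, fun L hL => ?_⟩
  by_contra! hcon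
  have hL0 : L = ⊥ := le_bot_iff.1 (hbot ▸ le_sInf hcon)
  rw [hL0, finrank_bot] at hL
  exact zero_ne_one hL
end

section
/- Let e ∈ {0,1,2} and r = e+1 (so (r,e) ∈ {(1,0),(2,1),(3,2)}). Then there is no hyperbolic, parabolic or elliptic avsp (according as e = 0, 1 or 2): there do not exist an F-vector space U of dimension r+2, a hyperplane H of U, a nondegenerate quadratic form Q on H of Witt defect e, a generator Π of Q, and such an avsp for (U, H, Q, Π). Indeed, the number of generators G of Q with G ∩ Π = {0} is strictly less than q^{e+1}. -/
open Module Submodule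

section WittIndexOne

variable {F : Type*} [Field F] {V : Type*} [AddCommGroup V] [Module F V]

theorem IsTotallySingular.finrank_le_wittIndex [FiniteDimensional F V] {Q : QuadraticForm F V}
    {W : Submodule F V} (hW : IsTotallySingular Q W) : Module.finrank F ↥W ≤ wittIndex Q :=
  le_csSup ⟨Module.finrank F V, by rintro n ⟨W, -, rfl⟩; exact W.finrank_le⟩ ⟨W, hW, rfl⟩

theorem IsTotallySingular.sup {Q : QuadraticForm F V} {W₁ W₂ : Submodule F V}
    (h₁ : IsTotallySingular Q W₁) (h₂ : IsTotallySingular Q W₂)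
    (h : ∀ x ∈ W₁, ∀ y ∈ W₂, QuadraticMap.polar Q x y = 0) :
    IsTotallySingular Q (W₁ ⊔ W₂) := by
  intro z hz
  obtain ⟨x, hx, y, hy, rfl⟩ := Submodule.mem_sup.mp hz
  rw [QuadraticMap.map_add Q, h₁ x hx, h₂ y hy, h x hx y hy, add_zero, add_zero]

theorem exists_eq_span_singleton_of_finrank_eq_one {W : Submodule F V}
    (hW : Module.finrank F ↥W = 1) : ∃ v : V, v ≠ 0 ∧ W = F ∙ v := by
  obtain ⟨v, hv, hspan⟩ := finrank_eq_one_iff'.mp hW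
  refine ⟨v, by simpa using hv, le_antisymm (fun w hw => ?_) ?_⟩
  · obtain ⟨c, hc⟩ := hspan ⟨w, hw⟩
    exact Submodule.mem_span_singleton.mpr ⟨c, congrArg Subtype.val hc⟩
  · exact (Submodule.span_singleton_le_iff_mem _ _).mpr v.2

/-- The level set at `1` of a nonzero linear form is an affine hyperplane. -/
theorem ncard_preimage_one_of_ne_zero [Fintype F] [FiniteDimensional F V] {f : V →ₗ[F] F}
    (hf : f ≠ 0) {n : ℕ} (hn : Module.finrank F V = n + 1) :
    {x : V | f x = 1}.ncard = Fintype.card F ^ n := by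
  obtain ⟨a, ha⟩ := LinearMap.surjective hf 1
  have hker : Module.finrank F ↥(LinearMap.ker f) = n := by
    have h := f.finrank_range_add_finrank_ker
    rw [LinearMap.range_eq_top.mpr (LinearMap.surjective hf), finrank_top,
      Module.finrank_self] at h
    omega
  have himage : {x : V | f x = 1} = (a + ·) '' (LinearMap.ker f : Set V) := by
    ext x
    refine ⟨fun hx => ⟨x - a, ?_, by simp⟩, ?_⟩
    · simp_all
    · rintro ⟨k, hk, rfl⟩
      simp_all
  rw [himage, Set.ncard_image_of_injective _ (add_right_injective a), ← Nat.card_coe_set_eq,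
    SetLike.coe_sort_coe, Module.natCard_eq_pow_finrank (K := F), hker, Nat.card_eq_fintype_card]

/-- In a nondegenerate quadratic space of Witt index one, a generator disjoint from `⟨p⟩` is spanned
by a unique singular vector `x` with `B(p, x) = 1`, and not every such vector is singular. -/
theorem ncard_isGenerator_inf_eq_bot_lt [Fintype F] [FiniteDimensional F V]
    {Q : QuadraticForm F V} (hQ : QuadNondeg Q) (hw : wittIndex Q = 1)
    {W : Submodule F V} (hW : IsGenerator Q W) {n : ℕ} (hn : Module.finrank F V = n + 1) :
    {G : Submodule F V | IsGenerator Q G ∧ G ⊓ W = ⊥}.ncard < Fintype.card F ^ n := by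
  have : Finite V := Module.finite_of_finite F
  obtain ⟨p, hp0, rfl⟩ := exists_eq_span_singleton_of_finrank_eq_one (hW.2.trans hw)
  have hp : Q p = 0 := hW.1 p (Submodule.mem_span_singleton_self p)
  set f : V →ₗ[F] F := QuadraticMap.polarBilin Q p
  have hfp (x : V) : f x = QuadraticMap.polar Q p x := rfl
  have hf0 : f ≠ 0 := fun h => hp0 (hQ p hp fun x => by rw [← hfp, h, LinearMap.zero_apply])
  have hsubset : {G : Submodule F V | IsGenerator Q G ∧ G ⊓ (F ∙ p) = ⊥} ⊆
      (fun x => F ∙ x) '' {x : V | f x = 1 ∧ Q x = 0} := by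
    rintro G ⟨hG, hGp⟩
    obtain ⟨g, hg0, rfl⟩ := exists_eq_span_singleton_of_finrank_eq_one (hG.2.trans hw)
    have hg : f g ≠ 0 := by
      intro h
      have hsup := (hG.1.sup hW.1 fun x hx y hy => by
        obtain ⟨c, rfl⟩ := Submodule.mem_span_singleton.mp hx
        obtain ⟨d, rfl⟩ := Submodule.mem_span_singleton.mp hy
        rw [QuadraticMap.polar_smul_left, QuadraticMap.polar_smul_right, QuadraticMap.polar_comm,
          ← hfp, h, smul_zero, smul_zero]).finrank_le_wittIndex
      have hdim := Submodule.finrank_sup_add_finrank_inf_eq (F ∙ g) (F ∙ p)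
      rw [hGp, finrank_bot, finrank_span_singleton hg0, finrank_span_singleton hp0] at hdim
      omega
    refine ⟨(f g)⁻¹ • g, ⟨by simp [hg], ?_⟩, ?_⟩
    · rw [QuadraticMap.map_smul, hG.1 g (Submodule.mem_span_singleton_self g), smul_zero]
    · exact Submodule.span_singleton_smul_eq (IsUnit.mk0 _ (inv_ne_zero hg)) g
  have hssubset : {x : V | f x = 1 ∧ Q x = 0} ⊂ {x : V | f x = 1} := by
    refine ⟨fun x hx => hx.1, fun h => ?_⟩
    obtain ⟨a, ha⟩ := LinearMap.surjective hf0 1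
    have hfpp : f p = 0 := by rw [hfp, QuadraticMap.polar_self, hp, smul_zero]
    have hpa : Q (p + a) = 0 := (h (show f (p + a) = 1 by rw [map_add, hfpp, ha, zero_add])).2
    rw [QuadraticMap.map_add Q, hp, (h (show f a = 1 from ha)).2, ← hfp, ha] at hpa
    simp at hpa
  calc _ ≤ ((fun x => F ∙ x) '' {x : V | f x = 1 ∧ Q x = 0}).ncard := Set.ncard_le_ncard hsubset
    _ ≤ {x : V | f x = 1 ∧ Q x = 0}.ncard := Set.ncard_image_le
    _ < {x : V | f x = 1}.ncard := Set.ncard_lt_ncard hssubset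
    _ = Fintype.card F ^ n := ncard_preimage_one_of_ne_zero hf0 hn

end WittIndexOne

theorem no_avsp_of_r_eq_e_add_one {F : Type*} [Field F] [Fintype F] (e r : ℕ)
    (he : e = 0 ∨ e = 1 ∨ e = 2) (hr : r = e + 1)
    (U : Type*) [AddCommGroup U] [Module F U] [FiniteDimensional F U]
    (hU : Module.finrank F U = r + 2)
    (H : Submodule F U) (hH : Module.finrank F ↥H = r + 1)
    (Q : QuadraticForm F ↥H) (hQnd : QuadNondeg Q)
    (hdef : Module.finrank F ↥H = 2 * wittIndex Q + e)
    (Pgen : Submodule F ↥H) (hPgen : IsGenerator Q Pgen) :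
    {G : Submodule F ↥H | IsGenerator Q G ∧ G ⊓ Pgen = ⊥}.ncard <
      Fintype.card F ^ (e + 1) ∧
    ¬ ∃ P : Set (Submodule F U), IsAvsp e r H Q Pgen P := by
  have hlt := ncard_isGenerator_inf_eq_bot_lt hQnd (by omega) hPgen (n := e + 1) (by omega)
  refine ⟨hlt, ?_⟩
  rintro ⟨P, hcard, -, -, hgen, hinj, -⟩
  have : Finite ↥H := Module.finite_of_finite F
  have hle := Set.ncard_le_ncard_of_injOn
    (t := {G : Submodule F ↥H | IsGenerator Q G ∧ G ⊓ Pgen = ⊥})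
    (fun S => S.comap H.subtype) hgen
    fun S hS T hT h => by_contra fun hne => hinj S hS T hT hne h
  rw [hcard, show (r + e + 1) / 2 = e + 1 by omega] at hle
  exact absurd hlt hle.not_gt
end
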